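/- arXiv:1404.2675 — 2 statements merged into one kernel-verified Lean document; each statement's English description precedes it below -/
import Mathlib

section
/- Let ζ, β, τ1, τ2, γ ∈ ℝ, a ∈ [0,1], b = √(1−a²)·e^{iγ}, and ν1, ν2 > 0 with ν1+ν2 = 1. Define |Ψ1⟩ = cos(ζ/2)|00⟩ + sin(ζ/2)(cosβ e^{iτ1}|10⟩ + sinβ e^{iτ2}|11⟩), |Ψ2⟩ = sin(ζ/2)|00⟩ − cos(ζ/2)(cosβ e^{iτ1}|10⟩ + sinβ e^{iτ2}|11⟩), ρ = ν1|Ψ1⟩⟨Ψ1| + ν2|Ψ2⟩⟨Ψ2|, |ξ⟩ = a|0⟩+b|1⟩, |ξ'⟩ = b̄|0⟩−a|1⟩, and M(η)_{jk} = (⟨j|⊗⟨η|) ρ (|k⟩⊗|η⟩). Then det M(ξ) = 0 and det M(ξ') = 0 hold simultaneously if and only if cosβ = 0 and (a = 0 or a = 1). -/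
/-!
Projecting Bob's qubit of `|Ψ1⟩`, `|Ψ2⟩` onto `η` leaves Alice with the vectors
`(cos(ζ/2) η̄₀, sin(ζ/2) w)` and `(sin(ζ/2) η̄₀, -cos(ζ/2) w)`, where
`w = cos β e^{iτ1} η̄₀ + sin β e^{iτ2} η̄₁`, and `M(η)` is the mixture of their projectors with
weights `ν1`, `ν2`. By Cauchy-Binet, `det M(η) = ν1 ν2 |η₀ w|²` (`det_condMat_steerRho`), so
`M(η)` is singular exactly when `η₀ = 0` or `w = 0`. For the orthonormal pair `ξ`, `ξ'`, the
amplitudes `w(ξ)`, `w(ξ')` are the components in a rotated orthonormal basis of the unit vector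
`(cos β e^{iτ1}, sin β e^{iτ2})`, so they cannot both vanish; hence `a = 0` or `b = 0`, and the
remaining equation gives `cos β = 0`.
-/

open Matrix Complex
open scoped ComplexOrder

noncomputable section

/-- The `j`-th standard basis vector of `ℂ²` (`|0⟩` and `|1⟩`). -/
def e2 (j : Fin 2) : Fin 2 → ℂ := fun i => if i = j then 1 else 0

/-- Tensor (Kronecker) product of two qubit vectors. -/
def tp2 (v w : Fin 2 → ℂ) : Fin 2 × Fin 2 → ℂ := fun p => v p.1 * w p.2

/-- Tensor (Kronecker) product of three qubit vectors. -/
def tp3 (v w u : Fin 2 → ℂ) : Fin 2 × Fin 2 × Fin 2 → ℂ :=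
  fun p => v p.1 * w p.2.1 * u p.2.2

/-- Kronecker product of two `2×2` matrices. -/
def tm2 (A B : Matrix (Fin 2) (Fin 2) ℂ) : Matrix (Fin 2 × Fin 2) (Fin 2 × Fin 2) ℂ :=
  Matrix.of fun p q => A p.1 q.1 * B p.2 q.2

/-- Kronecker product of three `2×2` matrices. -/
def tm3 (A B C : Matrix (Fin 2) (Fin 2) ℂ) :
    Matrix (Fin 2 × Fin 2 × Fin 2) (Fin 2 × Fin 2 × Fin 2) ℂ :=
  Matrix.of fun p q => A p.1 q.1 * B p.2.1 q.2.1 * C p.2.2 q.2.2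

/-- Outer product `|v⟩⟨v|`. -/
def outer {n : Type*} [Fintype n] (v : n → ℂ) : Matrix n n ℂ := Matrix.vecMulVec v (star v)

def sigmaX : Matrix (Fin 2) (Fin 2) ℂ := !![0, 1; 1, 0]
def sigmaY : Matrix (Fin 2) (Fin 2) ℂ := !![0, -Complex.I; Complex.I, 0]
def sigmaZ : Matrix (Fin 2) (Fin 2) ℂ := !![1, 0; 0, -1]

/-- The spin observable `n(θ,φ)·σ = sinθ cosφ σx + sinθ sinφ σy + cosθ σz`. -/
def nsigma (θ φ : ℝ) : Matrix (Fin 2) (Fin 2) ℂ :=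
  ((Real.sin θ * Real.cos φ : ℝ) : ℂ) • sigmaX +
    ((Real.sin θ * Real.sin φ : ℝ) : ℂ) • sigmaY + ((Real.cos θ : ℝ) : ℂ) • sigmaZ

/-- Kronecker tensor product of `N` `2×2` matrices, as a matrix indexed by `Fin N → Fin 2`. -/
def tpow {N : ℕ} (M : Fin N → Matrix (Fin 2) (Fin 2) ℂ) :
    Matrix (Fin N → Fin 2) (Fin N → Fin 2) ℂ :=
  Matrix.of fun i j => ∏ k, M k (i k) (j k)

/-- Kronecker tensor product of `N` qubit vectors, indexed by `Fin N → Fin 2`. -/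
def vpow {N : ℕ} (v : Fin N → (Fin 2 → ℂ)) : (Fin N → Fin 2) → ℂ :=
  fun i => ∏ k, v k (i k)

/-- `|Ψ1⟩ = cos(ζ/2)|00⟩ + sin(ζ/2)(cosβ e^{iτ1}|10⟩ + sinβ e^{iτ2}|11⟩)`. -/
def steerPsi1 (ζ β τ1 τ2 : ℝ) : Fin 2 × Fin 2 → ℂ := fun p =>
  (Real.cos (ζ / 2) : ℂ) * tp2 (e2 0) (e2 0) p +
    (Real.sin (ζ / 2) : ℂ) *
      ((Real.cos β : ℂ) * Complex.exp (τ1 * Complex.I) * tp2 (e2 1) (e2 0) p +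
        (Real.sin β : ℂ) * Complex.exp (τ2 * Complex.I) * tp2 (e2 1) (e2 1) p)

/-- `|Ψ2⟩ = sin(ζ/2)|00⟩ − cos(ζ/2)(cosβ e^{iτ1}|10⟩ + sinβ e^{iτ2}|11⟩)`. -/
def steerPsi2 (ζ β τ1 τ2 : ℝ) : Fin 2 × Fin 2 → ℂ := fun p =>
  (Real.sin (ζ / 2) : ℂ) * tp2 (e2 0) (e2 0) p -
    (Real.cos (ζ / 2) : ℂ) *
      ((Real.cos β : ℂ) * Complex.exp (τ1 * Complex.I) * tp2 (e2 1) (e2 0) p +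
        (Real.sin β : ℂ) * Complex.exp (τ2 * Complex.I) * tp2 (e2 1) (e2 1) p)

/-- `ρ = ν1|Ψ1⟩⟨Ψ1| + ν2|Ψ2⟩⟨Ψ2|`. -/
def steerRho (ζ β τ1 τ2 ν1 ν2 : ℝ) : Matrix (Fin 2 × Fin 2) (Fin 2 × Fin 2) ℂ :=
  (ν1 : ℂ) • outer (steerPsi1 ζ β τ1 τ2) + (ν2 : ℂ) • outer (steerPsi2 ζ β τ1 τ2)

/-- Bob's (unnormalized) conditional state for Alice:
`M(η)_{jk} = (⟨j| ⊗ ⟨η|) ρ (|k⟩ ⊗ |η⟩)`. -/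
def condMat (ρ : Matrix (Fin 2 × Fin 2) (Fin 2 × Fin 2) ℂ) (η : Fin 2 → ℂ) :
    Matrix (Fin 2) (Fin 2) ℂ :=
  Matrix.of fun j k => star (tp2 (e2 j) η) ⬝ᵥ ρ.mulVec (tp2 (e2 k) η)

/-- The amplitude of `|1⟩` left on Alice's side when Bob projects
`|1⟩ ⊗ (cos β e^{iτ1}|0⟩ + sin β e^{iτ2}|1⟩)` onto `η`. -/
def steerAmp (β τ1 τ2 : ℝ) (η : Fin 2 → ℂ) : ℂ :=
  (Real.cos β : ℂ) * Complex.exp (τ1 * Complex.I) * (starRingEnd ℂ) (η 0) +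
    (Real.sin β : ℂ) * Complex.exp (τ2 * Complex.I) * (starRingEnd ℂ) (η 1)

lemma det_condMat_steerRho (ζ β τ1 τ2 ν1 ν2 : ℝ) (η : Fin 2 → ℂ) :
    (condMat (steerRho ζ β τ1 τ2 ν1 ν2) η).det =
      ν1 * ν2 * (η 0 * (starRingEnd ℂ) (η 0)) *
        (steerAmp β τ1 τ2 η * (starRingEnd ℂ) (steerAmp β τ1 τ2 η)) := by
  have h1 : (Real.cos (ζ / 2) : ℂ) ^ 2 + (Real.sin (ζ / 2) : ℂ) ^ 2 = 1 := by
    exact_mod_cast Real.cos_sq_add_sin_sq (ζ / 2)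
  simp only [Matrix.det_fin_two, condMat, steerRho, outer, steerPsi1, steerPsi2, tp2, e2, steerAmp,
    Matrix.of_apply, dotProduct, Matrix.mulVec, Fintype.sum_prod_type, Fin.sum_univ_two,
    Matrix.add_apply, Matrix.smul_apply, Matrix.vecMulVec_apply, Pi.star_apply, smul_eq_mul,
    RCLike.star_def, map_add, map_sub, map_mul, Complex.conj_ofReal, map_one, map_zero,
    if_true, Fin.isValue, zero_ne_one, one_ne_zero, if_false, mul_zero, zero_mul, mul_one, one_mul,
    add_zero, zero_add, sub_zero, zero_sub, Complex.conj_conj]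
  generalize (Real.cos (ζ / 2) : ℂ) = c at *
  generalize (Real.sin (ζ / 2) : ℂ) = s at *
  generalize (starRingEnd ℂ) (Complex.exp (τ1 * Complex.I)) = f1
  generalize (starRingEnd ℂ) (Complex.exp (τ2 * Complex.I)) = f2
  generalize Complex.exp (τ1 * Complex.I) = g1
  generalize Complex.exp (τ2 * Complex.I) = g2
  generalize (starRingEnd ℂ) (η 0) = y0
  generalize (starRingEnd ℂ) (η 1) = y1
  generalize (Real.cos β : ℂ) = C
  generalize (Real.sin β : ℂ) = S
  -- The determinant carries the factor `(c² + s²)²`.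
  linear_combination ((c ^ 2 + s ^ 2) + 1) * ν1 * ν2 * (η 0 * y0) *
    ((C * g1 * y0 + S * g2 * y1) * (C * f1 * η 0 + S * f2 * η 1)) * h1

lemma det_condMat_steerRho_eq_zero_iff (ζ β τ1 τ2 ν1 ν2 : ℝ) (hν1 : 0 < ν1) (hν2 : 0 < ν2)
    (η : Fin 2 → ℂ) :
    (condMat (steerRho ζ β τ1 τ2 ν1 ν2) η).det = 0 ↔ η 0 = 0 ∨ steerAmp β τ1 τ2 η = 0 := by
  simp [hν1.ne', hν2.ne', det_condMat_steerRho]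

/-- For `ν1, ν2 > 0`, both conditional states of Alice's qubit (after Bob
projects onto `|ξ⟩ = a|0⟩+b|1⟩` respectively `|ξ'⟩ = b̄|0⟩−a|1⟩`) are pure, i.e.
`det M(ξ) = 0` and `det M(ξ') = 0`, if and only if `cosβ = 0` and (`a = 0` or `a = 1`). -/
theorem mutual_steering_forces_computational_basis (ζ β τ1 τ2 γ : ℝ) (a : ℝ)
    (ha : a ∈ Set.Icc (0 : ℝ) 1) (ν1 ν2 : ℝ) (hν1 : 0 < ν1) (hν2 : 0 < ν2)
    (hsum : ν1 + ν2 = 1) (b : ℂ)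
    (hb : b = (Real.sqrt (1 - a ^ 2) : ℂ) * Complex.exp (γ * Complex.I))
    (ξ ξ' : Fin 2 → ℂ)
    (hξ : ξ = fun i => (a : ℂ) * e2 0 i + b * e2 1 i)
    (hξ' : ξ' = fun i => (starRingEnd ℂ) b * e2 0 i - (a : ℂ) * e2 1 i) :
    ((condMat (steerRho ζ β τ1 τ2 ν1 ν2) ξ).det = 0 ∧
        (condMat (steerRho ζ β τ1 τ2 ν1 ν2) ξ').det = 0) ↔
      (Real.cos β = 0 ∧ (a = 0 ∨ a = 1)) := by
  have hξ0 : ξ 0 = a := by simp [hξ, e2]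
  have hξ1 : ξ 1 = b := by simp [hξ, e2]
  have hξ0' : ξ' 0 = (starRingEnd ℂ) b := by simp [hξ', e2]
  have hξ1' : ξ' 1 = -(a : ℂ) := by simp [hξ', e2]
  obtain ⟨ha0, ha1⟩ := ha
  have hnorm : (a : ℂ) * a + b * (starRingEnd ℂ) b = 1 := by
    have h : ‖b‖ = Real.sqrt (1 - a ^ 2) := by
      rw [hb, norm_mul, Complex.norm_exp_ofReal_mul_I, mul_one, Complex.norm_real,
        Real.norm_of_nonneg (Real.sqrt_nonneg _)]
    rw [Complex.mul_conj', h]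
    have h2 := Real.sq_sqrt (show 0 ≤ 1 - a ^ 2 by nlinarith)
    rw [← Complex.ofReal_pow, h2]
    push_cast
    ring
  rw [det_condMat_steerRho_eq_zero_iff _ _ _ _ _ _ hν1 hν2,
    det_condMat_steerRho_eq_zero_iff _ _ _ _ _ _ hν1 hν2]
  simp only [steerAmp, hξ0, hξ1, hξ0', hξ1', Complex.conj_conj, map_neg, Complex.conj_ofReal,
    map_eq_zero, Complex.ofReal_eq_zero]
  have hg1 : Complex.exp (τ1 * Complex.I) ≠ 0 := Complex.exp_ne_zero _
  have hg2 : Complex.exp (τ2 * Complex.I) ≠ 0 := Complex.exp_ne_zero _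
  generalize Complex.exp (τ1 * Complex.I) = g1 at *
  generalize Complex.exp (τ2 * Complex.I) = g2 at *
  constructor
  · rintro ⟨h | h, h' | h'⟩
    · simp [h, h'] at hnorm
    · have hb0 : b ≠ 0 := by
        rintro rfl
        simp [h] at hnorm
      refine ⟨?_, Or.inl h⟩
      simpa only [h, Complex.ofReal_zero, neg_zero, mul_zero, add_zero, mul_eq_zero, hg1, hb0,
        or_false, Complex.ofReal_eq_zero] using h'
    · have ha2 : a * a = 1 := by
        rw [h'] at hnorm
        simpa only [zero_mul, add_zero, ← Complex.ofReal_mul, Complex.ofReal_eq_one] using hnorm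
      have haone : a = 1 := by nlinarith
      refine ⟨?_, Or.inr haone⟩
      simpa only [h', haone, map_zero, Complex.ofReal_one, mul_one, mul_zero, add_zero,
        mul_eq_zero, hg1, or_false, Complex.ofReal_eq_zero] using h
    · -- Rotating back recovers both components of the unit vector, which are then both zero.
      exfalso
      have hc : (Real.cos β : ℂ) * g1 = 0 := by
        linear_combination (a : ℂ) * h + (starRingEnd ℂ) b * h' - Real.cos β * g1 * hnorm
      have hs : (Real.sin β : ℂ) * g2 = 0 := by
        linear_combination b * h - (a : ℂ) * h' - Real.sin β * g2 * hnorm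
      have hc0 : Real.cos β = 0 := by
        simpa only [mul_eq_zero, hg1, or_false, Complex.ofReal_eq_zero] using hc
      have hs0 : Real.sin β = 0 := by
        simpa only [mul_eq_zero, hg2, or_false, Complex.ofReal_eq_zero] using hs
      have := Real.cos_sq_add_sin_sq β
      simp [hc0, hs0] at this
  · rintro ⟨hc, rfl | rfl⟩
    · simp [hc]
    · have hb0 : b = 0 := by simpa using hnorm
      simp [hc, hb0]
end
end

section
/- Let N ≥ 2 be even, ζ ∈ ℝ, ν1, ν2 ≥ 0 with ν1+ν2 = 1, V = ν1−ν2, and ρ = ν1|Ψ1⟩⟨Ψ1| + ν2|Ψ2⟩⟨Ψ2| on (ℂ²)^{⊗N} with |Ψ1⟩ = cos(ζ/2)|0⟩^{⊗N} + sin(ζ/2)|1⟩^{⊗N}, |Ψ2⟩ = sin(ζ/2)|0⟩^{⊗N} − cos(ζ/2)|1⟩^{⊗N}. Take settings n_{1,1} = n(θ,0), n_{1,2} = n(π,0), and n_{k,1} = n(π−θ,0), n_{k,2} = n(0,0) for 2 ≤ k ≤ N, and let Q(i_1,…,i_N) = Tr(ρ · ⊗_{k=1}^N (n_{k,i_k}·σ)).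 Then I^N := (1/2^{N−1}) Σ_{(i_1,…,i_N)∈{1,2}^N} Q(i_1,…,i_N) − Q(2,…,2) = 1 + (1/2^{N−1})·( V sinζ sin^N θ − (1−cosθ)^N ). In particular, if 0 < θ < π, 0 < V sinζ, and tan(θ/2) < (V sinζ)^{1/N}, then I^N > 1. -/
/-!
Write `T = ⊗ₖ Mₖ`. Since `ρ` is supported on the span of `|0…0⟩` and `|1…1⟩`, the trace `Tr(ρ T)`
only sees the four corner entries of `T`, each of which is a product of entries of the `Mₖ`. If
the diagonal corners both equal `p` and the off-diagonal corners both equal `q`, then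
`Tr(ρ T) = p + V sin ζ · q` (`trace_ghzRho_of_corners`).

The sum of `Q(i₁,…,i_N)` over all settings factorizes: by distributivity, it is `Tr(ρ T)` with
`Mₖ = n_{k,1}·σ + n_{k,2}·σ`. The diagonal of `M₁` is `(-(1 - cos θ), 1 - cos θ)`, that of the
other `Mₖ` has the opposite sign, and all off-diagonal entries are `sin θ`. As `N` is even, an odd
number `N - 1` of sign changes makes both diagonal corners equal to `-(1 - cos θ)^N`
(`sum_evenQ`). In the same way `Q(2,…,2) = -1` (`evenQ_two`), which gives the formula for `I^N`.

The violation follows from `1 - cos θ = tan (θ/2) sin θ`: the hypothesis on `θ` says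
`tan (θ/2)^N < V sin ζ`, so multiplying by `sin θ ^ N > 0` shows that the correction to `1` is
positive.
-/

open Matrix Complex
open scoped ComplexOrder

noncomputable section

/-- `|Ψ1⟩ = cos(ζ/2)|0⟩^{⊗N} + sin(ζ/2)|1⟩^{⊗N}`. -/
def ghzPsi1 (N : ℕ) (ζ : ℝ) : (Fin N → Fin 2) → ℂ := fun i =>
  (Real.cos (ζ / 2) : ℂ) * vpow (fun _ => e2 0) i +
    (Real.sin (ζ / 2) : ℂ) * vpow (fun _ => e2 1) i

/-- `|Ψ2⟩ = sin(ζ/2)|0⟩^{⊗N} − cos(ζ/2)|1⟩^{⊗N}`. -/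
def ghzPsi2 (N : ℕ) (ζ : ℝ) : (Fin N → Fin 2) → ℂ := fun i =>
  (Real.sin (ζ / 2) : ℂ) * vpow (fun _ => e2 0) i -
    (Real.cos (ζ / 2) : ℂ) * vpow (fun _ => e2 1) i

/-- `ρ = ν1|Ψ1⟩⟨Ψ1| + ν2|Ψ2⟩⟨Ψ2|` on `(ℂ²)^{⊗N}`. -/
def ghzRho (N : ℕ) (ζ ν1 ν2 : ℝ) : Matrix (Fin N → Fin 2) (Fin N → Fin 2) ℂ :=
  (ν1 : ℂ) • outer (ghzPsi1 N ζ) + (ν2 : ℂ) • outer (ghzPsi2 N ζ)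

/-- Measurement settings for the even-`N` Bell test (setting "1" encoded by `0 : Fin 2`,
"2" by `1 : Fin 2`): `n_{1,1} = n(θ,0)`, `n_{1,2} = n(π,0)`, and for `k ≥ 2`
`n_{k,1} = n(π−θ,0)`, `n_{k,2} = n(0,0)`. -/
def evenSetting {N : ℕ} (θ : ℝ) (k : Fin N) (j : Fin 2) : Matrix (Fin 2) (Fin 2) ℂ :=
  if (k : ℕ) = 0 then (if j = 0 then nsigma θ 0 else nsigma Real.pi 0)
  else (if j = 0 then nsigma (Real.pi - θ) 0 else nsigma 0 0)

/-- `Q(i_1,…,i_N) = Tr(ρ·⊗_k n_{k,i_k}·σ)`. -/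
def evenQ (N : ℕ) (ζ ν1 ν2 θ : ℝ) (i : Fin N → Fin 2) : ℂ :=
  (ghzRho N ζ ν1 ν2 * tpow (fun k => evenSetting θ k (i k))).trace

/-- The Bell expression `I^N = (1/2^{N−1}) Σ_{i∈{1,2}^N} Q(i) − Q(2,…,2)`. -/
def evenBell (N : ℕ) (ζ ν1 ν2 θ : ℝ) : ℂ :=
  (1 / 2 ^ (N - 1) : ℂ) * (∑ i : Fin N → Fin 2, evenQ N ζ ν1 ν2 θ i) -
    evenQ N ζ ν1 ν2 θ (fun _ => 1)

lemma vpow_e2 (N : ℕ) (a : Fin 2) :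
    vpow (fun _ : Fin N => e2 a) = Pi.single (fun _ => a) (1 : ℂ) := by
  funext i
  simp [vpow, e2, Pi.single_apply, Finset.prod_ite_zero, funext_iff]

lemma trace_outer_mul {n : Type*} [Fintype n] (v : n → ℂ) (T : Matrix n n ℂ) :
    (outer v * T).trace = star v ⬝ᵥ (T *ᵥ v) := by
  rw [outer, Matrix.trace_mul_comm, Matrix.mul_vecMulVec, Matrix.trace_vecMulVec,
    dotProduct_comm]

/-- The expectation value of `T` in the unnormalized state `x|0…0⟩ + y|1…1⟩` with real
amplitudes, in terms of the corner entries of `T`. -/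
lemma trace_outer_ghz (N : ℕ) (x y : ℝ) (T : Matrix (Fin N → Fin 2) (Fin N → Fin 2) ℂ) :
    (outer ((x : ℂ) • vpow (fun _ : Fin N => e2 0) + (y : ℂ) • vpow (fun _ => e2 1)) * T).trace =
      x ^ 2 * T (fun _ => 0) (fun _ => 0) + y ^ 2 * T (fun _ => 1) (fun _ => 1) +
        x * y * (T (fun _ => 0) (fun _ => 1) + T (fun _ => 1) (fun _ => 0)) := by
  rw [trace_outer_mul, vpow_e2, vpow_e2]
  simp [Matrix.mulVec_add, Matrix.mulVec_smul]
  ring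

lemma trace_ghzRho (N : ℕ) (ζ ν1 ν2 : ℝ) (T : Matrix (Fin N → Fin 2) (Fin N → Fin 2) ℂ) :
    (ghzRho N ζ ν1 ν2 * T).trace =
      (ν1 * Real.cos (ζ / 2) ^ 2 + ν2 * Real.sin (ζ / 2) ^ 2 : ℝ) *
          T (fun _ => 0) (fun _ => 0) +
        (ν1 * Real.sin (ζ / 2) ^ 2 + ν2 * Real.cos (ζ / 2) ^ 2 : ℝ) *
          T (fun _ => 1) (fun _ => 1) +
        ((ν1 - ν2) * (Real.cos (ζ / 2) * Real.sin (ζ / 2)) : ℝ) *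
          (T (fun _ => 0) (fun _ => 1) + T (fun _ => 1) (fun _ => 0)) := by
  have h1 : ghzPsi1 N ζ = ((Real.cos (ζ / 2) : ℝ) : ℂ) • vpow (fun _ : Fin N => e2 0) +
      ((Real.sin (ζ / 2) : ℝ) : ℂ) • vpow (fun _ => e2 1) := rfl
  have h2 : ghzPsi2 N ζ = ((Real.sin (ζ / 2) : ℝ) : ℂ) • vpow (fun _ : Fin N => e2 0) +
      ((-Real.cos (ζ / 2) : ℝ) : ℂ) • vpow (fun _ => e2 1) := by
    funext i
    simp [ghzPsi2, sub_eq_add_neg]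
  rw [ghzRho, Matrix.add_mul, Matrix.smul_mul, Matrix.smul_mul, Matrix.trace_add,
    Matrix.trace_smul, Matrix.trace_smul, h1, h2, trace_outer_ghz, trace_outer_ghz]
  simp only [smul_eq_mul]
  push_cast
  ring

lemma trace_ghzRho_of_corners (N : ℕ) (ζ ν1 ν2 : ℝ) (hsum : ν1 + ν2 = 1)
    (T : Matrix (Fin N → Fin 2) (Fin N → Fin 2) ℂ) (p q : ℝ)
    (h00 : T (fun _ => 0) (fun _ => 0) = p) (h11 : T (fun _ => 1) (fun _ => 1) = p)
    (h01 : T (fun _ => 0) (fun _ => 1) = q) (h10 : T (fun _ => 1) (fun _ => 0) = q) :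
    (ghzRho N ζ ν1 ν2 * T).trace = ((p + (ν1 - ν2) * Real.sin ζ * q : ℝ) : ℂ) := by
  rw [trace_ghzRho, h00, h11, h01, h10]
  have hs : Real.sin ζ = 2 * Real.sin (ζ / 2) * Real.cos (ζ / 2) := by
    rw [← Real.sin_two_mul]
    ring_nf
  rw [hs]
  norm_cast
  linear_combination (ν1 + ν2) * p * Real.sin_sq_add_cos_sq (ζ / 2) + p * hsum

lemma nsigma_zero_right (θ : ℝ) :
    nsigma θ 0 = !![(Real.cos θ : ℂ), (Real.sin θ : ℂ);
      (Real.sin θ : ℂ), ((-Real.cos θ : ℝ) : ℂ)] := by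
  ext i j
  fin_cases i <;> fin_cases j <;> simp [nsigma, sigmaX, sigmaY, sigmaZ]

/-- Distributivity of the tensor product over sums of local operators. -/
lemma sum_tpow {N : ℕ} (A : Fin N → Fin 2 → Matrix (Fin 2) (Fin 2) ℂ) :
    ∑ i : Fin N → Fin 2, tpow (fun k => A k (i k)) = tpow (fun k => ∑ j, A k j) := by
  ext a b
  simp only [Matrix.sum_apply, tpow, Matrix.of_apply]
  exact (Fintype.prod_sum fun k j => A k j (a k) (b k)).symm

/-- The off-diagonal corners vanish and the diagonal corners are `(-1) * 1 ^ (N - 1)` and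
`1 * (-1) ^ (N - 1)`, which agree because `N - 1` is odd. -/
lemma evenQ_two (N : ℕ) (hN : 2 ≤ N) (hEven : Even N) (ζ ν1 ν2 θ : ℝ) (hsum : ν1 + ν2 = 1) :
    evenQ N ζ ν1 ν2 θ (fun _ => 1) = -1 := by
  obtain ⟨n, rfl⟩ : ∃ n, N = n + 1 := ⟨N - 1, by omega⟩
  have hn : Odd n := by simpa [Nat.even_add_one] using hEven
  rw [evenQ, trace_ghzRho_of_corners _ ζ ν1 ν2 hsum _ (-1) 0]
  · simp
  all_goals simp [tpow, evenSetting, nsigma_zero_right, Fin.prod_univ_succ, hn.neg_one_pow]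

lemma sum_evenQ (N : ℕ) (hN : 2 ≤ N) (hEven : Even N) (ζ ν1 ν2 θ : ℝ) (hsum : ν1 + ν2 = 1) :
    ∑ i : Fin N → Fin 2, evenQ N ζ ν1 ν2 θ i =
      ((-(1 - Real.cos θ) ^ N + (ν1 - ν2) * Real.sin ζ * Real.sin θ ^ N : ℝ) : ℂ) := by
  obtain ⟨n, rfl⟩ : ∃ n, N = n + 1 := ⟨N - 1, by omega⟩
  have hn : Odd n := by simpa [Nat.even_add_one] using hEven
  simp only [evenQ]
  rw [← Matrix.trace_sum, ← Matrix.mul_sum, sum_tpow (evenSetting θ),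
    trace_ghzRho_of_corners _ ζ ν1 ν2 hsum _ (-(1 - Real.cos θ) ^ (n + 1))
      (Real.sin θ ^ (n + 1))]
  · simp [tpow, evenSetting, nsigma_zero_right, Fin.prod_univ_succ]
    ring
  · have h : (-1 + Complex.cos θ) ^ n = -(1 - Complex.cos θ) ^ n := by
      rw [← hn.neg_pow]
      ring
    simp [tpow, evenSetting, nsigma_zero_right, Fin.prod_univ_succ]
    ring_nf
    rw [h]
    ring
  all_goals
    simp [tpow, evenSetting, nsigma_zero_right, Fin.prod_univ_succ]
    ring

/-- The half-angle condition forces `(1 - cos θ)^N < w sin^N θ`. -/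
lemma one_sub_cos_pow_lt (N : ℕ) (hN : N ≠ 0) (θ w : ℝ) (h0 : 0 < θ) (hπ : θ < Real.pi)
    (hw : 0 < w) (ht : Real.tan (θ / 2) < w ^ ((1 : ℝ) / N)) :
    (1 - Real.cos θ) ^ N < w * Real.sin θ ^ N := by
  have hc : 0 < Real.cos (θ / 2) := Real.cos_pos_of_mem_Ioo ⟨by linarith, by linarith⟩
  have htan : 0 < Real.tan (θ / 2) := Real.tan_pos_of_pos_of_lt_pi_div_two (by linarith)
    (by linarith)
  have hsin : 0 < Real.sin θ := Real.sin_pos_of_pos_of_lt_pi h0 hπ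
  have hhalf : 1 - Real.cos θ = Real.tan (θ / 2) * Real.sin θ := by
    have hcos : Real.cos θ = 2 * Real.cos (θ / 2) ^ 2 - 1 := by
      rw [← Real.cos_two_mul, mul_div_cancel₀ θ two_ne_zero]
    have hsin2 : Real.sin θ = 2 * Real.sin (θ / 2) * Real.cos (θ / 2) := by
      rw [← Real.sin_two_mul, mul_div_cancel₀ θ two_ne_zero]
    rw [Real.tan_eq_sin_div_cos, hcos, hsin2]
    field_simp
    linear_combination -2 * Real.sin_sq_add_cos_sq (θ / 2)
  have hpow : Real.tan (θ / 2) ^ N < w := by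
    calc Real.tan (θ / 2) ^ N < (w ^ ((1 : ℝ) / N)) ^ N := pow_lt_pow_left₀ ht htan.le hN
      _ = w := by rw [one_div, Real.rpow_inv_natCast_pow hw.le hN]
  rw [hhalf, mul_pow]
  exact mul_lt_mul_of_pos_right hpow (pow_pos hsin N)

/-- For even `N`,
`I^N = 1 + (1/2^{N−1})(V sinζ sin^N θ − (1−cosθ)^N)`; in particular if `0 < θ < π`,
`V sinζ > 0` and `tan(θ/2) < (V sinζ)^{1/N}`, then `I^N > 1`. -/
theorem even_N_bell_violation (N : ℕ) (hN : 2 ≤ N) (hEven : Even N) (ζ ν1 ν2 : ℝ)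
    (hν1 : 0 ≤ ν1) (hν2 : 0 ≤ ν2) (hsum : ν1 + ν2 = 1) (V : ℝ) (hV : V = ν1 - ν2) :
    ∀ θ : ℝ,
      evenBell N ζ ν1 ν2 θ =
          ((1 + (1 / 2 ^ (N - 1)) *
            (V * Real.sin ζ * Real.sin θ ^ N - (1 - Real.cos θ) ^ N) : ℝ) : ℂ) ∧
        (0 < θ → θ < Real.pi → 0 < V * Real.sin ζ →
          Real.tan (θ / 2) < (V * Real.sin ζ) ^ ((1 : ℝ) / N) →
          1 < (evenBell N ζ ν1 ν2 θ).re) := by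
  intro θ
  have hbell : evenBell N ζ ν1 ν2 θ =
      ((1 + (1 / 2 ^ (N - 1)) *
        (V * Real.sin ζ * Real.sin θ ^ N - (1 - Real.cos θ) ^ N) : ℝ) : ℂ) := by
    rw [evenBell, sum_evenQ N hN hEven ζ ν1 ν2 θ hsum, evenQ_two N hN hEven ζ ν1 ν2 θ hsum, hV]
    push_cast
    ring
  refine ⟨hbell, fun h0 hπ hw ht => ?_⟩
  have hlt := one_sub_cos_pow_lt N (by omega) θ (V * Real.sin ζ) h0 hπ hw ht
  rw [hbell, Complex.ofReal_re]
  exact lt_add_of_pos_right _ (mul_pos (by positivity) (sub_pos.mpr hlt))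
end
end
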